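/- Let k ≥ 1 and define U : [0,1] → ℝ by U(x) = (4/π^{2k+1}) Σ_{m=0}^∞ sin((2m+1)πx)/(2m+1)^{2k+1}. Then U is smooth on [0,1] and satisfies the boundary-value problem (−1)^k U^{(2k)}(x) = 1 for all x ∈ (0,1), together with U^{(2r)}(0) = U^{(2r)}(1) = 0 for r = 0,…,k−1; moreover max_{x∈[0,1]} U(x) = U(1/2) = (4/π^{2k+1}) Σ_{m=0}^∞ (−1)^m (2m+1)^{−(2k+1)}. -/

import Mathlib

/-! The argument runs by induction on `k`. Termwise differentiation gives `U_{k+1}'' = -U_k` on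
all of `ℝ` for `k ≥ 1` (`deriv_Ufun`, `deriv_Vfun_succ`), so the even derivatives satisfy
`U_k^{(2r)} = (-1)^r U_{k-r}` for `r < k`, which vanishes at `0` and `1`. The remaining second
derivative of `U_1` is not available termwise, and comes from the closed form `U_1(x) = x(1-x)/2` on `[0,1]`. More
generally the sum over odd frequencies is `S(x/2) - S(x)/2^{2k+1}`, where
`S(x) = Σ sin(2πnx)/n^{2k+1}` is a multiple of the Bernoulli polynomial `B_{2k+1}` on `[0,1]`, so
`U_k` agrees there with a polynomial and is smooth (`Ufun_eq_bernoulliFun`).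

For the maximum, `U_1` is concave on `[0,1]`; a concave function vanishing at both endpoints is
nonnegative, so `U_{k+1}'' = -U_k ≤ 0` makes `U_{k+1}` concave as well. Concavity and the symmetry
`U_k(1-x) = U_k(x)` give `U_k(x) ≤ U_k(1/2)`. -/

open Real

/-- The function `U(x) = (4/π^{2k+1}) Σ_{m=0}^∞ sin((2m+1)πx)/(2m+1)^{2k+1}`. -/
noncomputable def Ufun (k : ℕ) : ℝ → ℝ :=
  fun x => (4 / π ^ (2 * k + 1)) *
    ∑' m : ℕ, Real.sin ((2 * m + 1) * π * x) / (2 * m + 1) ^ (2 * k + 1)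

/-- The termwise derivative of `Ufun k`, namely
`(4/π^{2k}) Σ_{m=0}^∞ cos((2m+1)πx)/(2m+1)^{2k}`. -/
noncomputable def Vfun (k : ℕ) : ℝ → ℝ :=
  fun x => (4 / π ^ (2 * k)) *
    ∑' m : ℕ, Real.cos ((2 * m + 1) * π * x) / (2 * m + 1) ^ (2 * k)

lemma summable_odd_pow {p : ℕ} (hp : 2 ≤ p) :
    Summable fun m : ℕ => 1 / (2 * (m : ℝ) + 1) ^ p := by
  have h := (Real.summable_one_div_nat_pow (p := p)).2 (by omega)
  have h2 := h.comp_injective (i := fun m : ℕ => 2 * m + 1) (fun a b hab => by simpa using hab)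
  refine h2.congr fun m => ?_
  simp

lemma norm_div_odd_pow_le {a : ℝ} (ha : |a| ≤ 1) (m p : ℕ) :
    ‖a / (2 * (m : ℝ) + 1) ^ p‖ ≤ 1 / (2 * (m : ℝ) + 1) ^ p := by
  have h : (0 : ℝ) < (2 * (m : ℝ) + 1) ^ p := by positivity
  rw [norm_div, Real.norm_eq_abs, Real.norm_eq_abs, abs_of_pos h]
  gcongr

lemma hasDerivAt_Ufun {k : ℕ} (hk : 1 ≤ k) (x : ℝ) : HasDerivAt (Ufun k) (Vfun k x) x := by
  have hd : ∀ (m : ℕ) (y : ℝ),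
      HasDerivAt (fun y : ℝ => Real.sin ((2 * m + 1) * π * y) / (2 * m + 1) ^ (2 * k + 1))
        (π * (Real.cos ((2 * m + 1) * π * y) / (2 * m + 1) ^ (2 * k))) y := by
    intro m y
    have h := (((hasDerivAt_id y).const_mul ((2 * (m : ℝ) + 1) * π)).sin).div_const
      ((2 * (m : ℝ) + 1) ^ (2 * k + 1))
    refine h.congr_deriv ?_
    have : (2 * (m : ℝ) + 1) ≠ 0 := by positivity
    simp only [id]
    rw [pow_succ _ (2 * k)]
    field_simp
  have h := hasDerivAt_tsum (y₀ := 0)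
    ((summable_odd_pow (p := 2 * k) (by omega)).mul_left π) hd
    (fun m y => by
      rw [norm_mul, Real.norm_eq_abs, abs_of_pos pi_pos]
      exact mul_le_mul_of_nonneg_left (norm_div_odd_pow_le (Real.abs_cos_le_one _) m _) pi_pos.le)
    (by simp) x
  refine (h.const_mul (4 / π ^ (2 * k + 1))).congr_deriv ?_
  rw [tsum_mul_left, Vfun, pow_succ, ← mul_assoc]
  congr 1
  field_simp

lemma hasDerivAt_Vfun_succ {k : ℕ} (hk : 1 ≤ k) (x : ℝ) :
    HasDerivAt (Vfun (k + 1)) (-Ufun k x) x := by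
  have hd : ∀ (m : ℕ) (y : ℝ),
      HasDerivAt (fun y : ℝ => Real.cos ((2 * m + 1) * π * y) / (2 * m + 1) ^ (2 * (k + 1)))
        (-π * (Real.sin ((2 * m + 1) * π * y) / (2 * m + 1) ^ (2 * k + 1))) y := by
    intro m y
    have h := (((hasDerivAt_id y).const_mul ((2 * (m : ℝ) + 1) * π)).cos).div_const
      ((2 * (m : ℝ) + 1) ^ (2 * (k + 1)))
    refine h.congr_deriv ?_
    have : (2 * (m : ℝ) + 1) ≠ 0 := by positivity
    simp only [id]
    rw [show 2 * (k + 1) = 2 * k + 1 + 1 by ring, pow_succ _ (2 * k + 1)]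
    field_simp
  have h := hasDerivAt_tsum (y₀ := 0)
    ((summable_odd_pow (p := 2 * k + 1) (by omega)).mul_left π) hd
    (fun m y => by
      rw [norm_mul, norm_neg, Real.norm_eq_abs π, abs_of_pos pi_pos]
      exact mul_le_mul_of_nonneg_left (norm_div_odd_pow_le (Real.abs_sin_le_one _) m _) pi_pos.le)
    (by simpa using summable_odd_pow (p := 2 * (k + 1)) (by omega)) x
  refine (h.const_mul (4 / π ^ (2 * (k + 1)))).congr_deriv ?_
  rw [tsum_mul_left, Ufun, show 2 * (k + 1) = 2 * k + 1 + 1 by ring, pow_succ π (2 * k + 1),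
    ← mul_assoc, ← neg_mul]
  congr 1
  field_simp

lemma deriv_Ufun {k : ℕ} (hk : 1 ≤ k) : deriv (Ufun k) = Vfun k :=
  funext fun x => (hasDerivAt_Ufun hk x).deriv

lemma deriv_Vfun_succ {k : ℕ} (hk : 1 ≤ k) : deriv (Vfun (k + 1)) = fun x => -Ufun k x :=
  funext fun x => (hasDerivAt_Vfun_succ hk x).deriv

lemma iteratedDeriv_Ufun (j r : ℕ) :
    iteratedDeriv (2 * r) (Ufun (j + 1 + r)) = fun x => (-1 : ℝ) ^ r * Ufun (j + 1) x := by
  induction r with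
  | zero => simp
  | succ r ih =>
    rw [show 2 * (r + 1) = 2 * r + 1 + 1 by ring, iteratedDeriv_succ', deriv_Ufun (by omega),
      iteratedDeriv_succ', ← add_assoc, deriv_Vfun_succ (by omega)]
    funext x
    rw [iteratedDeriv_fun_neg, ih, pow_succ]
    ring

lemma Ufun_zero_right (k : ℕ) : Ufun k 0 = 0 := by simp [Ufun]

lemma sin_odd_mul_pi (m : ℕ) : Real.sin ((2 * m + 1) * π) = 0 := by
  have := Real.sin_nat_mul_pi (2 * m + 1)
  push_cast at this
  exact this

lemma cos_odd_mul_pi (m : ℕ) : Real.cos ((2 * m + 1) * π) = -1 := by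
  have := Real.cos_nat_mul_pi (2 * m + 1)
  push_cast at this
  rw [this, pow_succ, pow_mul]
  norm_num

lemma Ufun_one_right (k : ℕ) : Ufun k 1 = 0 := by
  simp [Ufun, sin_odd_mul_pi]

lemma Ufun_one_sub (k : ℕ) (x : ℝ) : Ufun k (1 - x) = Ufun k x := by
  unfold Ufun
  congr 2
  funext m
  rw [mul_sub, mul_one, Real.sin_sub, sin_odd_mul_pi, cos_odd_mul_pi]
  simp

/-- On `[0,1]`, `Ufun k` is the Fourier series of `B_{2k+1}` with its even frequencies removed,
hence a combination of `B_{2k+1}(x/2)` and `B_{2k+1}(x)`. -/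
lemma Ufun_eq_bernoulliFun {k : ℕ} (hk : 1 ≤ k) {x : ℝ} (hx : x ∈ Set.Icc (0 : ℝ) 1) :
    Ufun k x = (4 / π ^ (2 * k + 1)) *
      ((-1 : ℝ) ^ (k + 1) * (2 * π) ^ (2 * k + 1) / 2 / (Nat.factorial (2 * k + 1)) *
        (bernoulliFun (2 * k + 1) (x / 2) - bernoulliFun (2 * k + 1) x / 2 ^ (2 * k + 1))) := by
  have hx2 : x / 2 ∈ Set.Icc (0 : ℝ) 1 := ⟨by linarith [hx.1], by linarith [hx.2]⟩
  have h1 := hasSum_one_div_nat_pow_mul_sin (k := k) (by omega) hx2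
  have h2 := hasSum_one_div_nat_pow_mul_sin (k := k) (by omega) hx
  rw [← bernoulliFun] at h1 h2
  generalize (-1 : ℝ) ^ (k + 1) * (2 * π) ^ (2 * k + 1) / 2 / (Nat.factorial (2 * k + 1)) = c
    at h1 h2 ⊢
  generalize bernoulliFun (2 * k + 1) (x / 2) = b₁ at h1 ⊢
  generalize bernoulliFun (2 * k + 1) x = b₂ at h2 ⊢
  have he : Summable fun m : ℕ => 1 / ((2 * m : ℕ) : ℝ) ^ (2 * k + 1) *
      Real.sin (2 * π * (2 * m : ℕ) * (x / 2)) :=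
    h1.summable.comp_injective (i := fun m : ℕ => 2 * m) (fun a b hab => by simpa using hab)
  have ho : Summable fun m : ℕ => 1 / ((2 * m + 1 : ℕ) : ℝ) ^ (2 * k + 1) *
      Real.sin (2 * π * (2 * m + 1 : ℕ) * (x / 2)) :=
    h1.summable.comp_injective (i := fun m : ℕ => 2 * m + 1) (fun a b hab => by simpa using hab)
  have hsplit := tsum_even_add_odd
    (f := fun n : ℕ => 1 / (n : ℝ) ^ (2 * k + 1) * Real.sin (2 * π * n * (x / 2))) he ho
  rw [h1.tsum_eq] at hsplit
  have heq : ∑' m : ℕ, 1 / ((2 * m : ℕ) : ℝ) ^ (2 * k + 1) *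
      Real.sin (2 * π * (2 * m : ℕ) * (x / 2)) =
      (1 / 2 ^ (2 * k + 1)) * ∑' n : ℕ, 1 / (n : ℝ) ^ (2 * k + 1) * Real.sin (2 * π * n * x) := by
    rw [← tsum_mul_left]
    congr 1
    funext m
    push_cast
    rw [mul_pow, ← one_div_mul_one_div, mul_assoc (1 / _),
      show 2 * π * (2 * (m : ℝ)) * (x / 2) = 2 * π * m * x by ring]
  rw [heq, h2.tsum_eq] at hsplit
  unfold Ufun
  congr 1
  have hodd : ∑' m : ℕ, Real.sin ((2 * m + 1) * π * x) / (2 * m + 1) ^ (2 * k + 1) =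
      ∑' m : ℕ, 1 / ((2 * m + 1 : ℕ) : ℝ) ^ (2 * k + 1) *
        Real.sin (2 * π * (2 * m + 1 : ℕ) * (x / 2)) := by
    congr 1
    funext m
    push_cast
    rw [one_div, inv_mul_eq_div]
    congr 2
    ring
  rw [hodd, ← sub_eq_iff_eq_add'.2 hsplit.symm]
  ring

lemma bernoulliFun_three (x : ℝ) : bernoulliFun 3 x = x ^ 3 - 3 / 2 * x ^ 2 + x / 2 := by
  have h2 : bernoulli 2 = 6⁻¹ := by rw [bernoulli_eq_bernoulli'_of_ne_one (by norm_num)]; simp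
  have h3 : bernoulli 3 = 0 := by rw [bernoulli_eq_bernoulli'_of_ne_one (by norm_num)]; simp
  simp [bernoulliFun, Polynomial.bernoulli_def, Finset.sum_range_succ, h2, h3]
  norm_num [Nat.choose]
  ring

lemma Ufun_one_eq {x : ℝ} (hx : x ∈ Set.Icc (0 : ℝ) 1) : Ufun 1 x = x * (1 - x) / 2 := by
  rw [Ufun_eq_bernoulliFun le_rfl hx]
  norm_num [bernoulliFun_three, Nat.factorial]
  field_simp
  ring

lemma iteratedDeriv_two_Ufun_one {x : ℝ} (hx : x ∈ Set.Ioo (0 : ℝ) 1) :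
    iteratedDeriv 2 (Ufun 1) x = -1 := by
  have h : Ufun 1 =ᶠ[nhds x] fun y => y * (1 - y) / 2 := by
    filter_upwards [Ioo_mem_nhds hx.1 hx.2] with y hy
    exact Ufun_one_eq ⟨hy.1.le, hy.2.le⟩
  have hd : deriv (fun y : ℝ => y * (1 - y) / 2) = fun y => 1 / 2 - y := by
    funext y
    have h := (((hasDerivAt_id y).mul ((hasDerivAt_id y).const_sub 1)).div_const 2).deriv
    simp only [id] at h
    refine Eq.trans h ?_
    ring
  rw [h.iteratedDeriv_eq, iteratedDeriv_succ', hd, iteratedDeriv_one]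
  simp

/-- Concavity passes from `Ufun k` to `Ufun (k + 1)` because a concave function vanishing at `0`
and `1` is nonnegative, and `Ufun (k + 1)` has second derivative `-Ufun k`. -/
lemma concaveOn_Ufun {k : ℕ} (hk : 1 ≤ k) : ConcaveOn ℝ (Set.Icc 0 1) (Ufun k) := by
  induction k, hk using Nat.le_induction with
  | base =>
    refine ⟨convex_Icc 0 1, fun x hx y hy a b ha hb hab => ?_⟩
    rw [Ufun_one_eq hx, Ufun_one_eq hy, Ufun_one_eq (convex_Icc 0 1 hx hy ha hb hab)]
    obtain rfl : b = 1 - a := by linarith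
    simp only [smul_eq_mul]
    nlinarith [mul_nonneg (mul_nonneg ha hb) (sq_nonneg (x - y))]
  | succ k hk ih =>
    refine concaveOn_of_deriv2_nonpos' (convex_Icc 0 1)
      (fun x _ => (hasDerivAt_Ufun (by omega) x).differentiableAt.differentiableWithinAt) ?_ ?_
    · rw [deriv_Ufun (by omega)]
      exact fun x _ => (hasDerivAt_Vfun_succ hk x).differentiableAt.differentiableWithinAt
    · intro x hx
      rw [Function.iterate_succ, Function.iterate_one, Function.comp_apply,
        deriv_Ufun (by omega), deriv_Vfun_succ hk]
      have h := ih.2 (Set.left_mem_Icc.2 zero_le_one) (Set.right_mem_Icc.2 zero_le_one)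
        (sub_nonneg.2 hx.2) hx.1 (by ring)
      simp only [Ufun_zero_right, Ufun_one_right, smul_eq_mul, mul_zero, mul_one, zero_add] at h
      linarith

/-- For `k ≥ 1`, the function `U` is smooth on `[0,1]` and solves the
boundary-value problem `(-1)^k U^{(2k)} = 1` on `(0,1)` with `U^{(2r)}(0) = U^{(2r)}(1) = 0`
for `r = 0,…,k-1`; moreover its maximum on `[0,1]` is attained at `x = 1/2` and equals
`(4/π^{2k+1}) Σ_m (-1)^m (2m+1)^{-(2k+1)}`. -/
theorem stmt11 (k : ℕ) (hk : 1 ≤ k) :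
    ContDiffOn ℝ (⊤ : ℕ∞) (Ufun k) (Set.Icc 0 1) ∧
    (∀ x ∈ Set.Ioo (0 : ℝ) 1, (-1 : ℝ) ^ k * iteratedDeriv (2 * k) (Ufun k) x = 1) ∧
    (∀ r : ℕ, r < k →
      iteratedDeriv (2 * r) (Ufun k) 0 = 0 ∧ iteratedDeriv (2 * r) (Ufun k) 1 = 0) ∧
    (∀ x ∈ Set.Icc (0 : ℝ) 1, Ufun k x ≤ Ufun k (1 / 2)) ∧
    Ufun k (1 / 2) =
      (4 / π ^ (2 * k + 1)) * ∑' m : ℕ, (-1 : ℝ) ^ m / (2 * m + 1) ^ (2 * k + 1) := by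
  refine ⟨?_, ?_, ?_, ?_, ?_⟩
  · refine ContDiffOn.congr (ContDiff.contDiffOn ?_) fun x hx => Ufun_eq_bernoulliFun hk hx
    have hB : ContDiff ℝ (⊤ : ℕ∞) (bernoulliFun (2 * k + 1)) :=
      (contDiff_bernoulliFun (2 * k + 1)).of_le (by simp)
    have hB2 : ContDiff ℝ (⊤ : ℕ∞) fun x : ℝ => bernoulliFun (2 * k + 1) (x / 2) :=
      hB.comp (contDiff_id.div_const 2)
    exact contDiff_const.mul (contDiff_const.mul (hB2.sub (hB.div_const _)))
  · intro x hx
    obtain ⟨j, rfl⟩ : ∃ j, k = 0 + 1 + j := ⟨k - 1, by omega⟩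
    have h : iteratedDeriv (2 * (0 + 1 + j)) (Ufun (0 + 1 + j)) x =
        iteratedDeriv 2 (iteratedDeriv (2 * j) (Ufun (0 + 1 + j))) x := by
      simp only [iteratedDeriv_eq_iterate]
      rw [show 2 * (0 + 1 + j) = 2 + 2 * j by ring, Function.iterate_add_apply]
    rw [h, iteratedDeriv_Ufun, iteratedDeriv_const_mul_field, zero_add,
      iteratedDeriv_two_Ufun_one hx, pow_add, pow_one]
    have hs : ((-1 : ℝ) ^ j) * (-1) ^ j = 1 := by rw [← mul_pow]; norm_num
    linear_combination hs
  · intro r hr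
    obtain ⟨j, rfl⟩ : ∃ j, k = j + 1 + r := ⟨k - 1 - r, by omega⟩
    simp [iteratedDeriv_Ufun, Ufun_zero_right, Ufun_one_right]
  · intro x hx
    have hx' : 1 - x ∈ Set.Icc (0 : ℝ) 1 := ⟨sub_nonneg.2 hx.2, by linarith [hx.1]⟩
    have h := (concaveOn_Ufun hk).2 hx hx' one_half_pos.le one_half_pos.le (add_halves 1)
    simp only [smul_eq_mul, Ufun_one_sub] at h
    rw [show 1 / 2 * x + 1 / 2 * (1 - x) = 1 / 2 by ring] at h
    linarith
  · unfold Ufun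
    congr 2
    funext m
    rw [show (2 * (m : ℝ) + 1) * π * (1 / 2) = π / 2 + m * π by ring, Real.sin_add_nat_mul_pi,
      Real.sin_pi_div_two, mul_one]
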